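/- arXiv:1912.00275 — 6 statements merged into one kernel-verified Lean document; each statement's English description precedes it below -/
import Mathlib

section
/- Let S ⊆ Fin n be a nonempty set of vertices such that any two vertices of S are mutually reachable using only positive-weight edges between vertices of S (the induced subgraph on S is strongly connected), and suppose S is not isolated: there exist i ∈ S and j ∉ S with w i j > 0. Then the principal submatrix of the graph Laplacian L with rows and columns indexed by S is invertible; in particular, 0 is not an eigenvalue of this submatrix. -/
open Matrix Polynomial

/-- The graph Laplacian `L = D - A` of a weighted digraph with weight matrix `w`. -/
def graphLaplacian {n : ℕ} (w : Fin n → Fin n → ℝ) : Matrix (Fin n) (Fin n) ℝ :=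
  Matrix.diagonal (fun i => ∑ j, w i j) - Matrix.of w

/-!
A row of the principal submatrix of the Laplacian is weakly diagonally dominant, and strictly so
when an edge leaves `S` from that vertex. If `v` is in the kernel and `‖v i‖` is maximal, weak
dominance of row `i` forces `‖v j‖ = ‖v i‖` at every out-neighbour `j` of `i`, while strict
dominance forces `v i = 0`. Following a path from a maximal entry to a vertex with an edge leaving
`S` therefore gives `v = 0`.
-/

section DiagDominant

variable {ι K : Type*} [Fintype ι] [DecidableEq ι] [NormedField K] {A : Matrix ι ι K}

theorem norm_diag_mul_le_of_mulVec_eq_zero {v : ι → K} (hv : A *ᵥ v = 0) (i : ι) :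
    ‖A i i‖ * ‖v i‖ ≤ ∑ j ∈ Finset.univ.erase i, ‖A i j‖ * ‖v j‖ := by
  have hrow : A i i * v i + ∑ j ∈ Finset.univ.erase i, A i j * v j = 0 :=
    (Finset.add_sum_erase _ _ (Finset.mem_univ i)).trans (congrFun hv i)
  calc ‖A i i‖ * ‖v i‖ = ‖∑ j ∈ Finset.univ.erase i, A i j * v j‖ := by
        rw [← norm_mul, eq_neg_of_add_eq_zero_left hrow, norm_neg]
    _ ≤ ∑ j ∈ Finset.univ.erase i, ‖A i j‖ * ‖v j‖ := by
        simpa only [norm_mul] using norm_sum_le (Finset.univ.erase i) fun j => A i j * v j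

theorem norm_eq_of_mulVec_eq_zero_of_sum_row_le_diag {v : ι → K} (hv : A *ᵥ v = 0) {i j : ι}
    (hdom : ∑ k ∈ Finset.univ.erase i, ‖A i k‖ ≤ ‖A i i‖) (hmax : ∀ k, ‖v k‖ ≤ ‖v i‖)
    (hij : A i j ≠ 0) : ‖v j‖ = ‖v i‖ := by
  obtain rfl | hne := eq_or_ne j i
  · rfl
  by_contra hvj
  have hlt : ∑ k ∈ Finset.univ.erase i, ‖A i k‖ * ‖v k‖
      < ∑ k ∈ Finset.univ.erase i, ‖A i k‖ * ‖v i‖ :=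
    Finset.sum_lt_sum (fun k _ => by gcongr; exact hmax k)
      ⟨j, Finset.mem_erase.mpr ⟨hne, Finset.mem_univ j⟩,
        mul_lt_mul_of_pos_left ((hmax j).lt_of_ne hvj) (norm_pos_iff.mpr hij)⟩
  refine lt_irrefl (‖A i i‖ * ‖v i‖) ?_
  calc ‖A i i‖ * ‖v i‖ ≤ ∑ k ∈ Finset.univ.erase i, ‖A i k‖ * ‖v k‖ :=
        norm_diag_mul_le_of_mulVec_eq_zero hv i
    _ < (∑ k ∈ Finset.univ.erase i, ‖A i k‖) * ‖v i‖ := by rwa [Finset.sum_mul]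
    _ ≤ ‖A i i‖ * ‖v i‖ := by gcongr

theorem eq_zero_of_mulVec_eq_zero_of_sum_row_lt_diag {v : ι → K} (hv : A *ᵥ v = 0) {i : ι}
    (hdom : ∑ k ∈ Finset.univ.erase i, ‖A i k‖ < ‖A i i‖) (hmax : ∀ k, ‖v k‖ ≤ ‖v i‖) :
    v i = 0 := by
  by_contra hvi
  refine lt_irrefl (‖A i i‖ * ‖v i‖) ?_
  calc ‖A i i‖ * ‖v i‖ ≤ ∑ k ∈ Finset.univ.erase i, ‖A i k‖ * ‖v k‖ :=
        norm_diag_mul_le_of_mulVec_eq_zero hv i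
    _ ≤ (∑ k ∈ Finset.univ.erase i, ‖A i k‖) * ‖v i‖ := by
        rw [Finset.sum_mul]
        gcongr with k
        exact hmax k
    _ < ‖A i i‖ * ‖v i‖ := mul_lt_mul_of_pos_right hdom (norm_pos_iff.mpr hvi)

/-- Weakly chained diagonally dominant matrices: every row is weakly diagonally dominant, and from
every row a chain of nonzero entries leads to a strictly diagonally dominant row. They extend the
strictly diagonally dominant matrices, for which all chains can be taken to be trivial. -/
structure IsWeaklyChainedDiagDominant (A : Matrix ι ι K) : Prop where
  sum_row_le_diag : ∀ i, ∑ j ∈ Finset.univ.erase i, ‖A i j‖ ≤ ‖A i i‖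
  exists_chain : ∀ i, ∃ k, Relation.ReflTransGen (fun a b => A a b ≠ 0) i k ∧
    ∑ j ∈ Finset.univ.erase k, ‖A k j‖ < ‖A k k‖

namespace IsWeaklyChainedDiagDominant

theorem eq_zero_of_mulVec_eq_zero (hA : IsWeaklyChainedDiagDominant A) {v : ι → K}
    (hv : A *ᵥ v = 0) : v = 0 := by
  cases isEmpty_or_nonempty ι
  · exact Subsingleton.elim _ _
  obtain ⟨m, hm⟩ := Finite.exists_max fun i => ‖v i‖
  obtain ⟨k, hchain, hk⟩ := hA.exists_chain m
  have hkm : ‖v k‖ = ‖v m‖ := by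
    clear hk
    induction hchain with
    | refl => rfl
    | @tail a b _ hab ha =>
      exact (norm_eq_of_mulVec_eq_zero_of_sum_row_le_diag hv (hA.sum_row_le_diag a)
        (ha ▸ hm) hab).trans ha
  have hvk : v k = 0 := eq_zero_of_mulVec_eq_zero_of_sum_row_lt_diag hv hk (hkm ▸ hm)
  ext i
  simpa [← hkm, hvk] using hm i

theorem isUnit (hA : IsWeaklyChainedDiagDominant A) : IsUnit A :=
  mulVec_injective_iff_isUnit.mp <|
    (injective_iff_map_eq_zero A.mulVecLin).mpr fun _ => hA.eq_zero_of_mulVec_eq_zero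

end IsWeaklyChainedDiagDominant

end DiagDominant

theorem exists_reflTransGen_subtype_of_notMem {α : Type*} {r : α → α → Prop} {s : Set α} {i j : α}
    (hij : Relation.ReflTransGen r i j) (hi : i ∈ s) (hj : j ∉ s) :
    ∃ k : s, Relation.ReflTransGen (fun a b : s => r a b) ⟨i, hi⟩ k ∧ ∃ l ∉ s, r k l := by
  induction hij using Relation.ReflTransGen.head_induction_on with
  | refl => exact absurd hi hj
  | @head a b hab _ ih =>
    by_cases hb : b ∈ s
    · obtain ⟨k, hbk, hk⟩ := ih hb
      exact ⟨k, hbk.head hab, hk⟩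
    · exact ⟨⟨a, hi⟩, .refl, b, hb, hab⟩

section Laplacian

variable {n : ℕ} {w : Fin n → Fin n → ℝ} {S : Finset (Fin n)}

theorem graphLaplacian_apply_self (w : Fin n → Fin n → ℝ) (i : Fin n) :
    graphLaplacian w i i = ∑ j ∈ Finset.univ.erase i, w i j := by
  simp [graphLaplacian, Finset.sum_erase_eq_sub]

theorem graphLaplacian_apply_of_ne (w : Fin n → Fin n → ℝ) {i j : Fin n} (hij : i ≠ j) :
    graphLaplacian w i j = -w i j := by
  simp [graphLaplacian, hij]

theorem norm_graphLaplacian_apply_self (hw : ∀ i j, 0 ≤ w i j) (i : Fin n) :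
    ‖graphLaplacian w i i‖ = ∑ j ∈ Finset.univ.erase i, w i j := by
  rw [graphLaplacian_apply_self, Real.norm_of_nonneg (Finset.sum_nonneg fun j _ => hw i j)]

theorem sum_erase_norm_graphLaplacian_subtype (hw : ∀ i j, 0 ≤ w i j) (i : {x // x ∈ S}) :
    ∑ j ∈ Finset.univ.erase i, ‖graphLaplacian w i j‖ = ∑ j ∈ S.erase i, w i j := by
  have hoff : ∀ j ∈ Finset.univ.erase i, ‖graphLaplacian w i j‖ = w i j := fun j hj => by
    rw [graphLaplacian_apply_of_ne w (Subtype.coe_ne_coe.mpr (Finset.ne_of_mem_erase hj).symm),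
      norm_neg, Real.norm_of_nonneg (hw i j)]
  rw [Finset.sum_congr rfl hoff, Finset.sum_erase_eq_sub (Finset.mem_univ i),
    Finset.sum_erase_eq_sub i.2, Finset.sum_coe_sort S (w i)]

theorem sum_erase_norm_graphLaplacian_le (hw : ∀ i j, 0 ≤ w i j) (i : {x // x ∈ S}) :
    ∑ j ∈ Finset.univ.erase i, ‖graphLaplacian w i j‖ ≤ ‖graphLaplacian w i i‖ := by
  rw [sum_erase_norm_graphLaplacian_subtype hw, norm_graphLaplacian_apply_self hw]
  exact Finset.sum_le_sum_of_subset_of_nonneg (Finset.erase_subset_erase _ S.subset_univ)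
    fun j _ _ => hw i j

theorem sum_erase_norm_graphLaplacian_lt (hw : ∀ i j, 0 ≤ w i j) (i : {x // x ∈ S}) {j : Fin n}
    (hj : j ∉ S) (hij : 0 < w i j) :
    ∑ k ∈ Finset.univ.erase i, ‖graphLaplacian w i k‖ < ‖graphLaplacian w i i‖ := by
  rw [sum_erase_norm_graphLaplacian_subtype hw, norm_graphLaplacian_apply_self hw]
  have hji : j ≠ i := fun h => hj (h ▸ i.2)
  exact Finset.sum_lt_sum_of_subset (Finset.erase_subset_erase _ S.subset_univ)
    (Finset.mem_erase.mpr ⟨hji, Finset.mem_univ j⟩) (fun h => hj (Finset.mem_of_mem_erase h)) hij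
    fun k _ _ => hw i k

theorem isWeaklyChainedDiagDominant_graphLaplacian_submatrix (hw : ∀ i j, 0 ≤ w i j)
    (hexit : ∀ i ∈ S, ∃ j ∉ S, Relation.ReflTransGen (fun a b => 0 < w a b) i j) :
    IsWeaklyChainedDiagDominant ((graphLaplacian w).submatrix
      (Subtype.val : {x // x ∈ S} → Fin n) (Subtype.val : {x // x ∈ S} → Fin n)) where
  sum_row_le_diag := sum_erase_norm_graphLaplacian_le hw
  exists_chain := by
    rintro ⟨i, hi⟩
    obtain ⟨j, hj, hij⟩ := hexit i hi
    obtain ⟨k, hik, l, hl, hkl⟩ := exists_reflTransGen_subtype_of_notMem (s := S) hij hi hj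
    refine ⟨k, hik.lift' id fun a b hab => ?_, sum_erase_norm_graphLaplacian_lt hw k hl hkl⟩
    -- A self-loop does not contribute to the Laplacian, so it is dropped from the chain.
    obtain rfl | hne := eq_or_ne a b
    · exact .refl
    · refine .single ?_
      rw [submatrix_apply, id, id, graphLaplacian_apply_of_ne w (Subtype.coe_ne_coe.mpr hne)]
      exact neg_ne_zero.mpr hab.ne'

theorem submatrix_isUnit_of_strongly_connected_not_isolated_general (hw : ∀ i j, 0 ≤ w i j)
    (hexit : ∀ i ∈ S, ∃ j ∉ S, Relation.ReflTransGen (fun a b => 0 < w a b) i j) :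
    IsUnit ((graphLaplacian w).submatrix
        (Subtype.val : {x // x ∈ S} → Fin n) (Subtype.val : {x // x ∈ S} → Fin n)) ∧
      ¬ ((graphLaplacian w).submatrix
        (Subtype.val : {x // x ∈ S} → Fin n)
        (Subtype.val : {x // x ∈ S} → Fin n)).charpoly.IsRoot 0 := by
  have hunit := (isWeaklyChainedDiagDominant_graphLaplacian_submatrix hw hexit).isUnit
  refine ⟨hunit, ?_⟩
  rwa [← mem_spectrum_iff_isRoot_charpoly, spectrum.zero_notMem_iff]

end Laplacian

/-- If the induced subgraph on a nonempty vertex set `S` is strongly connected and `S` is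
not isolated, then the principal submatrix of the graph Laplacian indexed by `S` is
invertible; in particular, `0` is not an eigenvalue of this submatrix. -/
theorem submatrix_isUnit_of_strongly_connected_not_isolated (n : ℕ) (hn : 1 ≤ n)
    (w : Fin n → Fin n → ℝ) (hw : ∀ i j, 0 ≤ w i j) (hdiag : ∀ i, w i i = 0)
    (S : Finset (Fin n)) (hS : S.Nonempty)
    (hconn : ∀ i ∈ S, ∀ j ∈ S,
      Relation.ReflTransGen (fun a b => a ∈ S ∧ b ∈ S ∧ 0 < w a b) i j)
    (hniso : ∃ i ∈ S, ∃ j, j ∉ S ∧ 0 < w i j) :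
    IsUnit ((graphLaplacian w).submatrix
        (Subtype.val : {x // x ∈ S} → Fin n) (Subtype.val : {x // x ∈ S} → Fin n)) ∧
      ¬ ((graphLaplacian w).submatrix
        (Subtype.val : {x // x ∈ S} → Fin n)
        (Subtype.val : {x // x ∈ S} → Fin n)).charpoly.IsRoot 0 := by
  obtain ⟨k, hk, j, hj, hkj⟩ := hniso
  exact submatrix_isUnit_of_strongly_connected_not_isolated_general hw fun i hi =>
    ⟨j, hj, (Relation.ReflTransGen.mono (fun _ _ hab => hab.2.2) _ _ (hconn i hi k hk)).tail hkj⟩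
end

section
/- For every weighted digraph on n ≥ 1 vertices with graph Laplacian L, the dimension (finrank over ℝ) of the kernel of the linear map x ↦ L *ᵥ x equals the number of isolated strongly connected components of the digraph: the number of equivalence classes C of the mutual-reachability equivalence relation on Fin n such that w i j = 0 for all i ∈ C and all j ∉ C. -/
open Matrix Polynomial

/-- Vertex `j` is reachable from vertex `i` through positive-weight edges. -/
def reaches {n : ℕ} (w : Fin n → Fin n → ℝ) : Fin n → Fin n → Prop :=
  Relation.ReflTransGen (fun a b => 0 < w a b)

/-!
Call a vertex terminal if everything it reaches also reaches it back; the isolated components are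
the components of the terminal vertices, and every vertex of a finite digraph reaches a terminal
one. Let `L` be the Laplacian. At a vertex `i` where `x` is maximal and
`(L x) i = ∑ j, w i j (x i - x j)` is nonpositive, every summand vanishes, so maximality propagates
along the edges. Hence, if every vertex reaches a set `B`, a vector is determined by its values on
`B` and the values of its Laplacian off `B`; by a dimension count, any such data are attained.

Choose one vertex in each isolated component. Restricting kernel vectors to the chosen vertices is
injective by uniqueness. It is surjective because prescribed values, spread over the isolated
components and extended by solving the Dirichlet problem with the terminal vertices as boundary,
give a kernel vector: the edges leaving a terminal vertex stay in its component.
-/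

open Relation

section Reachability

variable {V : Type*} {r : V → V → Prop} {u v : V}

/-- The strongly connected component of `v` in the digraph with edge relation `r`. -/
def strongComponent (r : V → V → Prop) (v : V) : Set V :=
  {u | ReflTransGen r v u ∧ ReflTransGen r u v}

/-- A vertex is terminal if every vertex reachable from it reaches it back, that is, if its strongly
connected component is a sink of the condensation of the digraph. -/
def IsTerminal (r : V → V → Prop) (v : V) : Prop :=
  ∀ u, ReflTransGen r v u → ReflTransGen r u v

theorem mem_strongComponent_self (r : V → V → Prop) (v : V) : v ∈ strongComponent r v :=
  ⟨.refl, .refl⟩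

theorem strongComponent_eq_of_mem (hu : u ∈ strongComponent r v) :
    strongComponent r u = strongComponent r v :=
  Set.ext fun _ => ⟨fun h => ⟨hu.1.trans h.1, h.2.trans hu.2⟩,
    fun h => ⟨hu.2.trans h.1, h.2.trans hu.1⟩⟩

theorem IsTerminal.mem_strongComponent (hv : IsTerminal r v) (hvu : ReflTransGen r v u) :
    u ∈ strongComponent r v :=
  ⟨hvu, hv u hvu⟩

theorem IsTerminal.of_reflTransGen (hv : IsTerminal r v) (hvu : ReflTransGen r v u) :
    IsTerminal r u :=
  fun _ huk => (hv _ (hvu.trans huk)).trans hvu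

theorem isTerminal_iff_no_edge_leaves_strongComponent :
    IsTerminal r v ↔ ∀ i ∈ strongComponent r v, ∀ j ∉ strongComponent r v, ¬ r i j := by
  refine ⟨fun hv i hi j hj hij => hj (hv.mem_strongComponent (hi.1.tail hij)),
    fun hclosed u hvu => ?_⟩
  suffices u ∈ strongComponent r v from this.2
  induction hvu with
  | refl => exact mem_strongComponent_self r v
  | tail _ hij ih => exact by_contra fun hj => hclosed _ ih _ hj hij

theorem exists_isTerminal_reflTransGen [Finite V] (r : V → V → Prop) (v : V) :
    ∃ u, IsTerminal r u ∧ ReflTransGen r v u := by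
  let _ : Preorder V :=
    { le := ReflTransGen r, le_refl := fun _ => .refl, le_trans := fun _ _ _ => .trans }
  obtain ⟨u, hvu, hu⟩ := Finite.exists_le_maximal (p := fun _ : V => True) (a := v) trivial
  exact ⟨u, fun k huk => hu.2 trivial huk, hvu⟩

end Reachability

section WeightedDigraph

variable {V R : Type*} [Zero R] [PartialOrder R]

/-- The edge relation of a weighted digraph: an edge is a pair of positive weight. -/
abbrev PosEdge (w : V → V → R) (i j : V) : Prop :=
  0 < w i j

/-- The isolated strongly connected components: those that no pair of nonzero weight leaves. -/
def isolatedComponents (w : V → V → R) : Set (Set V) :=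
  {C | (∃ v, C = strongComponent (PosEdge w) v) ∧ ∀ i ∈ C, ∀ j ∉ C, w i j = 0}

theorem isolatedComponents_eq_image {w : V → V → R} (hw : ∀ i j, 0 ≤ w i j) :
    isolatedComponents w = strongComponent (PosEdge w) '' {v | IsTerminal (PosEdge w) v} := by
  have hzero (i j : V) : w i j = 0 ↔ ¬ PosEdge w i j :=
    ⟨fun h => h.not_gt, fun h => ((hw i j).eq_of_not_lt h).symm⟩
  ext C
  simp only [isolatedComponents, hzero, Set.mem_ofPred_eq, Set.mem_image,
    isTerminal_iff_no_edge_leaves_strongComponent]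
  constructor
  · rintro ⟨⟨v, rfl⟩, hclosed⟩
    exact ⟨v, hclosed, rfl⟩
  · rintro ⟨v, hclosed, rfl⟩
    exact ⟨⟨v, rfl⟩, hclosed⟩

end WeightedDigraph

section MaximumPrinciple

variable {V R : Type*} [Fintype V] [DecidableEq V] [Ring R]

/-- The Laplacian `D - A` of a weighted digraph on an arbitrary finite vertex set, with weights in
an arbitrary ring; `graphLaplacian` is the case of real weights on `Fin n`. -/
def weightedLaplacian (w : V → V → R) : Matrix V V R :=
  diagonal (fun i => ∑ j, w i j) - of w

theorem weightedLaplacian_mulVec_apply (w : V → V → R) (x : V → R) (i : V) :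
    (weightedLaplacian w *ᵥ x) i = ∑ j, w i j * (x i - x j) := by
  simp only [weightedLaplacian, sub_mulVec, Pi.sub_apply, mulVec_diagonal, mul_sub,
    Finset.sum_sub_distrib, Finset.sum_mul]
  rfl

variable [LinearOrder R] [IsStrictOrderedRing R] {w : V → V → R} {x : V → R} {B : Set V}

theorem eq_of_posEdge_of_forall_le (hw : ∀ i j, 0 ≤ w i j) {i j : V} (hmax : ∀ k, x k ≤ x i)
    (hsub : (weightedLaplacian w *ᵥ x) i ≤ 0) (hij : PosEdge w i j) : x j = x i := by
  have hnonneg : ∀ k ∈ Finset.univ, 0 ≤ w i k * (x i - x k) :=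
    fun k _ => mul_nonneg (hw i k) (sub_nonneg.mpr (hmax k))
  rw [weightedLaplacian_mulVec_apply] at hsub
  have hsum := hsub.antisymm (Finset.sum_nonneg hnonneg)
  have hterm := (Finset.sum_eq_zero_iff_of_nonneg hnonneg).mp hsum j (Finset.mem_univ j)
  exact (sub_eq_zero.mp ((mul_eq_zero.mp hterm).resolve_left hij.ne')).symm

theorem le_of_le_on_boundary_of_subharmonic (hw : ∀ i j, 0 ≤ w i j)
    (hreach : ∀ i, ∃ j ∈ B, ReflTransGen (PosEdge w) i j) {c : R} (hB : ∀ i ∈ B, x i ≤ c)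
    (hsub : ∀ i ∉ B, (weightedLaplacian w *ᵥ x) i ≤ 0) (k : V) : x k ≤ c := by
  have : Nonempty V := ⟨k⟩
  obtain ⟨m, hm⟩ := Finite.exists_max x
  by_contra! hk
  have hmB : ∀ i, x i = x m → i ∉ B := fun i hi hiB =>
    (hk.trans_le (hm k)).not_ge (hi ▸ hB i hiB)
  have hconst : ∀ j, ReflTransGen (PosEdge w) m j → x j = x m := by
    intro j hmj
    induction hmj with
    | refl => rfl
    | tail _ hij ih =>
      exact (eq_of_posEdge_of_forall_le hw (by rwa [ih]) (hsub _ (hmB _ ih)) hij).trans ih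
  obtain ⟨j, hjB, hmj⟩ := hreach m
  exact hmB j (hconst j hmj) hjB

theorem eq_zero_of_eq_zero_on_boundary_of_harmonic (hw : ∀ i j, 0 ≤ w i j)
    (hreach : ∀ i, ∃ j ∈ B, ReflTransGen (PosEdge w) i j) (hB : ∀ i ∈ B, x i = 0)
    (hharm : ∀ i ∉ B, (weightedLaplacian w *ᵥ x) i = 0) : x = 0 := by
  funext k
  refine le_antisymm (le_of_le_on_boundary_of_subharmonic hw hreach (fun i hi => (hB i hi).le)
    (fun i hi => (hharm i hi).le) k) (neg_nonpos.mp ?_)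
  refine le_of_le_on_boundary_of_subharmonic (x := -x) hw hreach (fun i hi => ?_) (fun i hi => ?_) k
  · rw [Pi.neg_apply, hB i hi, neg_zero]
  · rw [mulVec_neg, Pi.neg_apply, hharm i hi, neg_zero]

end MaximumPrinciple

section Kernel

variable {V K : Type*} [Fintype V] [DecidableEq V] [Field K] [LinearOrder K]
  [IsStrictOrderedRing K] {w : V → V → K}

theorem exists_harmonic_extension (hw : ∀ i j, 0 ≤ w i j) {B : Set V}
    (hreach : ∀ i, ∃ j ∈ B, ReflTransGen (PosEdge w) i j) (g : V → K) :
    ∃ x : V → K, Set.EqOn x g B ∧ ∀ i ∉ B, (weightedLaplacian w *ᵥ x) i = 0 := by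
  classical
  let M : Matrix V V K := of fun i => if i ∈ B then Pi.single i 1 else weightedLaplacian w i
  have hM_mem (x : V → K) {i : V} (hi : i ∈ B) : (M *ᵥ x) i = x i :=
    calc (M *ᵥ x) i = Pi.single i 1 ⬝ᵥ x := congrArg (· ⬝ᵥ x) (if_pos hi)
      _ = x i := single_one_dotProduct i x
  have hM_notMem (x : V → K) {i : V} (hi : i ∉ B) :
      (M *ᵥ x) i = (weightedLaplacian w *ᵥ x) i :=
    congrArg (· ⬝ᵥ x) (if_neg hi)
  have hinj : Function.Injective M.mulVecLin := by
    refine (injective_iff_map_eq_zero _).mpr fun x hx =>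
      eq_zero_of_eq_zero_on_boundary_of_harmonic hw hreach (fun i hi => ?_) fun i hi => ?_
    · exact (hM_mem x hi).symm.trans (congrFun hx i)
    · exact (hM_notMem x hi).symm.trans (congrFun hx i)
  obtain ⟨x, hx⟩ := LinearMap.injective_iff_surjective.mp hinj (B.piecewise g 0)
  refine ⟨x, fun i hi => ?_, fun i hi => ?_⟩
  · rw [← hM_mem x hi, ← mulVecLin_apply, hx, Set.piecewise_eq_of_mem _ _ _ hi]
  · rw [← hM_notMem x hi, ← mulVecLin_apply, hx, Set.piecewise_eq_of_notMem _ _ _ hi,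
      Pi.zero_apply]

theorem exists_mem_ker_eqOn_isTerminal (hw : ∀ i j, 0 ≤ w i j) (f : Set V → K) :
    ∃ x ∈ LinearMap.ker (weightedLaplacian w).mulVecLin,
      ∀ i, IsTerminal (PosEdge w) i → x i = f (strongComponent (PosEdge w) i) := by
  obtain ⟨x, hxf, hharm⟩ := exists_harmonic_extension hw (B := {i | IsTerminal (PosEdge w) i})
    (exists_isTerminal_reflTransGen _) (fun i => f (strongComponent (PosEdge w) i))
  refine ⟨x, LinearMap.mem_ker.mpr (funext fun i => ?_), fun i hi => hxf hi⟩
  by_cases hi : IsTerminal (PosEdge w) i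
  · rw [mulVecLin_apply, weightedLaplacian_mulVec_apply]
    refine Finset.sum_eq_zero fun j _ => ?_
    rcases (hw i j).eq_or_lt with hij | hij
    · rw [← hij, zero_mul]
    · have hreach : ReflTransGen (PosEdge w) i j := .single hij
      have hxj : x j = x i := by
        rw [hxf hi, hxf (hi.of_reflTransGen hreach)]
        exact congrArg f (strongComponent_eq_of_mem (hi.mem_strongComponent hreach))
      rw [hxj, sub_self, mul_zero]
  · exact hharm i hi

theorem finrank_ker_weightedLaplacian_eq_ncard (hw : ∀ i j, 0 ≤ w i j) {s : Set V}
    (hterm : ∀ i ∈ s, IsTerminal (PosEdge w) i) (hinj : s.InjOn (strongComponent (PosEdge w)))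
    (hreach : ∀ i, ∃ j ∈ s, ReflTransGen (PosEdge w) i j) :
    Module.finrank K (LinearMap.ker (weightedLaplacian w).mulVecLin) = s.ncard := by
  classical
  let restrict : LinearMap.ker (weightedLaplacian w).mulVecLin →ₗ[K] s → K :=
    LinearMap.funLeft K K (Subtype.val : s → V) ∘ₗ Submodule.subtype _
  have hrestrict_inj : Function.Injective restrict := by
    refine (injective_iff_map_eq_zero _).mpr fun x hx => Subtype.ext ?_
    exact eq_zero_of_eq_zero_on_boundary_of_harmonic hw hreach (fun i hi => congrFun hx ⟨i, hi⟩)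
      fun i _ => congrFun (LinearMap.mem_ker.mp x.2) i
  have hrestrict_surj : Function.Surjective restrict := by
    intro f
    obtain ⟨x, hxker, hx⟩ := exists_mem_ker_eqOn_isTerminal hw
      (Function.extend (s.domRestrict (strongComponent (PosEdge w))) f 0)
    refine ⟨⟨x, hxker⟩, funext fun i => ?_⟩
    exact (hx i (hterm i i.2)).trans (hinj.injective.extend_apply f 0 i)
  rw [(LinearEquiv.ofBijective restrict ⟨hrestrict_inj, hrestrict_surj⟩).finrank_eq,
    Module.finrank_fintype_fun_eq_card, ← Nat.card_eq_fintype_card, Nat.card_coe_set_eq]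

theorem finrank_ker_eq_card_isolated_components_general (hw : ∀ i j, 0 ≤ w i j) :
    Module.finrank K (LinearMap.ker (weightedLaplacian w).mulVecLin)
      = (isolatedComponents w).ncard := by
  obtain ⟨s, hterm, hbij⟩ :=
    Set.exists_subset_bijOn {v | IsTerminal (PosEdge w) v} (strongComponent (PosEdge w))
  have hreach (i : V) : ∃ j ∈ s, ReflTransGen (PosEdge w) i j := by
    obtain ⟨t, ht, hit⟩ := exists_isTerminal_reflTransGen (PosEdge w) i
    obtain ⟨j, hjs, hjt⟩ := hbij.surjOn (Set.mem_image_of_mem _ ht)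
    have hj : j ∈ strongComponent (PosEdge w) t := hjt ▸ mem_strongComponent_self _ j
    exact ⟨j, hjs, hit.trans hj.1⟩
  rw [finrank_ker_weightedLaplacian_eq_ncard hw hterm hbij.injOn hreach, hbij.ncard_eq,
    isolatedComponents_eq_image hw]

end Kernel

/-- The dimension of the kernel of the graph Laplacian equals the number of isolated
strongly connected components of the digraph. -/
theorem finrank_ker_eq_card_isolated_components (n : ℕ) (hn : 1 ≤ n)
    (w : Fin n → Fin n → ℝ) (hw : ∀ i j, 0 ≤ w i j) (hdiag : ∀ i, w i i = 0) :
    Module.finrank ℝ (LinearMap.ker (graphLaplacian w).mulVecLin)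
      = {C : Set (Fin n) |
          (∃ v, C = {u | reaches w v u ∧ reaches w u v}) ∧
          ∀ i ∈ C, ∀ j ∉ C, w i j = 0}.ncard :=
  finrank_ker_eq_card_isolated_components_general hw
end

section
/- For a weighted digraph on n ≥ 1 vertices with graph Laplacian L, the characteristic polynomial of L equals ∏_{i : Fin n} (X − C(d⁺(i))) if and only if the digraph is acyclic. (Equivalently: the multiset of eigenvalues of L, with multiplicity, equals the multiset of out-degrees {d⁺(1), …, d⁺(n)} if and only if the digraph is acyclic.) -/
open Matrix Polynomial

/-- The weighted digraph is acyclic: there is no directed cycle. -/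
def IsAcyclic {n : ℕ} (w : Fin n → Fin n → ℝ) : Prop :=
  ¬ ∃ (k : ℕ) (x : ℕ → Fin n), 1 ≤ k ∧ x k = x 0 ∧ ∀ t < k, 0 < w (x t) (x (t + 1))

/-!
Ordering the vertices of an acyclic digraph topologically makes `D - A` triangular, so its
characteristic polynomial is read off the diagonal.

Conversely, the characteristic polynomial of a matrix `M` determines `det p(M)` for every monic `p`:
over a ring where `p` splits, each linear factor `M - a` has determinant `± charpoly(a)`. Taking
`p = Y ^ k - X` over `R[X]`, it determines the characteristic polynomial of `M ^ k`, hence the trace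
of every polynomial in `M`.

If `D - A` and `D` have the same characteristic polynomial, choose `c` so large that `E = c - D` is
nonnegative. Then `(E + A) ^ k` and `E ^ k` have the same trace, while
`tr E ^ k + tr A ^ k ≤ tr (E + A) ^ k` for nonnegative matrices and `k ≥ 1`. So `tr A ^ k ≤ 0`, but
a closed walk of length `k` makes `tr A ^ k` positive.
-/

open Relation

section Acyclic

variable {α : Type*} {r : α → α → Prop}

lemma transGen_iff_exists_seq {a b : α} :
    TransGen r a b ↔
      ∃ (k : ℕ) (x : ℕ → α), 1 ≤ k ∧ x 0 = a ∧ x k = b ∧ ∀ t < k, r (x t) (x (t + 1)) := by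
  constructor
  · intro h
    induction h using TransGen.head_induction_on with
    | @single a hab => exact ⟨1, Function.update (fun _ ↦ b) 0 a, by simp [hab]⟩
    | @head a c hac _ ih =>
      obtain ⟨k, x, -, rfl, hxk, hx⟩ := ih
      refine ⟨k + 1, fun | 0 => a | t + 1 => x t, by lia, rfl, hxk, fun t ht ↦ ?_⟩
      cases t with
      | zero => exact hac
      | succ t => exact hx t (by lia)
  · rintro ⟨k, x, hk, rfl, rfl, hx⟩
    have h : TransGen (fun s t ↦ r (x s) (x t)) 0 k :=
      transGen_of_succ_of_lt _ (fun t ht ↦ hx t ht.2) hk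
    exact h.lift x fun _ _ ↦ id

lemma exists_linearOrder_lt_of_acyclic (hr : ∀ a, ¬ TransGen r a a) :
    ∃ _ : LinearOrder α, ∀ a b, r a b → a < b := by
  let _ : PartialOrder α :=
    { le := ReflTransGen r
      le_refl := fun _ ↦ .refl
      le_trans := fun _ _ _ ↦ .trans
      le_antisymm := fun a b hab hba ↦ by
        rcases reflTransGen_iff_eq_or_transGen.1 hab with rfl | hab
        · rfl
        · exact (hr a (hab.trans_left hba)).elim }
  refine ⟨(inferInstance : LinearOrder (LinearExtension α)), fun a b hab ↦ ?_⟩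
  have hne : a ≠ b := by
    rintro rfl
    exact hr a (.single hab)
  exact lt_of_le_of_ne (toLinearExtension.monotone (ReflTransGen.single hab)) hne

end Acyclic

section Charpoly

variable {m R : Type*} [Fintype m] [DecidableEq m] [CommRing R]

lemma charpoly_eq_prod_diag_of_acyclic {r : m → m → Prop} (hr : ∀ i, ¬ TransGen r i i)
    {M : Matrix m m R} (hM : ∀ i j, i ≠ j → M i j ≠ 0 → r i j) :
    M.charpoly = ∏ i, (X - C (M i i)) := by
  obtain ⟨_, hlt⟩ := exists_linearOrder_lt_of_acyclic hr
  refine charpoly_of_isUpperTriangular M fun i j (hji : j < i) ↦ ?_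
  by_contra hij
  exact hji.asymm (hlt i j (hM i j hji.ne' hij))

lemma det_aeval_X_add_C (M : Matrix m m R) (a : R) :
    (aeval M (X + C a)).det = (-1) ^ Fintype.card m * M.charpoly.eval (-a) := by
  rw [eval_charpoly, ← det_neg]
  congr 1
  simp [algebraMap_eq_diagonal, Pi.algebraMap_def, ← diagonal_neg]

variable {M N : Matrix m m R}

lemma det_aeval_eq_of_charpoly_eq_of_splits (h : M.charpoly = N.charpoly) {p : R[X]}
    (hp : p.Splits) : (aeval M p).det = (aeval N p).det := by
  induction hp using Submonoid.closure_induction with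
  | mem p hp =>
    obtain ⟨a, rfl⟩ | ⟨a, rfl⟩ := hp
    · simp only [aeval_C, algebraMap_eq_diagonal]
    · simp only [det_aeval_X_add_C, h]
  | one => simp only [map_one]
  | mul p q _ _ ihp ihq => simp only [map_mul, det_mul, ihp, ihq]

lemma aeval_map_algebraMap_eq_map_aeval (S : Type*) [CommRing S] [Algebra R S]
    (M : Matrix m m R) (p : R[X]) :
    aeval (M.map (algebraMap R S)) (p.map (algebraMap R S)) =
      (aeval M p).map (algebraMap R S) := by
  have hcomm : (algebraMap S (Matrix m m S)).comp (algebraMap R S) =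
      (algebraMap R S).mapMatrix.comp (algebraMap R (Matrix m m R)) := by
    ext a i j
    by_cases hij : i = j <;> simp [algebraMap_matrix_apply, hij]
  exact (map_aeval_eq_aeval_map hcomm p M).symm

lemma det_aeval_eq_of_charpoly_eq_of_monic (h : M.charpoly = N.charpoly) {p : R[X]}
    (hp : p.Monic) : (aeval M p).det = (aeval N p).det := by
  nontriviality R
  obtain ⟨S, _, _, _, _, _, hsplits⟩ := hp.exists_splits_map
  apply FaithfulSMul.algebraMap_injective R S
  have hmap : (M.map (algebraMap R S)).charpoly = (N.map (algebraMap R S)).charpoly := by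
    rw [charpoly_map, charpoly_map, h]
  simpa only [aeval_map_algebraMap_eq_map_aeval, RingHom.map_det, RingHom.mapMatrix_apply] using
    det_aeval_eq_of_charpoly_eq_of_splits hmap hsplits

lemma charpoly_pow_eq_det_aeval (M : Matrix m m R) (k : ℕ) :
    (M ^ k).charpoly = (-1) ^ Fintype.card m * (aeval (M.map C) (X ^ k - C X : R[X][X])).det := by
  rw [charpoly, ← det_neg, charmatrix]
  congr 1
  simp [algebraMap_eq_diagonal, Pi.algebraMap_def, Matrix.map_pow]

lemma charpoly_pow_eq_of_charpoly_eq (h : M.charpoly = N.charpoly) (k : ℕ) :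
    (M ^ k).charpoly = (N ^ k).charpoly := by
  rcases eq_or_ne k 0 with rfl | hk
  · simp only [pow_zero]
  · have hmap : (M.map C).charpoly = (N.map C).charpoly := by rw [charpoly_map, charpoly_map, h]
    rw [charpoly_pow_eq_det_aeval, charpoly_pow_eq_det_aeval,
      det_aeval_eq_of_charpoly_eq_of_monic hmap (monic_X_pow_sub_C X hk)]

lemma trace_aeval_eq_of_charpoly_eq (h : M.charpoly = N.charpoly) (p : R[X]) :
    (aeval M p).trace = (aeval N p).trace := by
  have trace_pow (k : ℕ) : (M ^ k).trace = (N ^ k).trace := by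
    simp only [trace_eq_neg_charpoly_nextCoeff, charpoly_pow_eq_of_charpoly_eq h]
  simp only [aeval_eq_sum_range, trace_sum, trace_smul, trace_pow]

end Charpoly

section Nonneg

variable {m R : Type*} [Fintype m] [DecidableEq m]

lemma pow_add_pow_apply_le [Semiring R] [PartialOrder R] [IsOrderedRing R] {A B : Matrix m m R}
    (hA : ∀ i j, 0 ≤ A i j) (hB : ∀ i j, 0 ≤ B i j) {k : ℕ} (hk : k ≠ 0) (i j : m) :
    (A ^ k) i j + (B ^ k) i j ≤ ((A + B) ^ k) i j := by
  induction k, Nat.one_le_iff_ne_zero.2 hk using Nat.le_induction generalizing i j with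
  | base => simp
  | succ k hk ih =>
    have hAB : ∀ i j, 0 ≤ (A + B) i j := fun i j ↦ add_nonneg (hA i j) (hB i j)
    simp only [pow_succ, mul_apply, ← Finset.sum_add_distrib]
    refine Finset.sum_le_sum fun l _ ↦ ?_
    calc (A ^ k) i l * A l j + (B ^ k) i l * B l j
      _ ≤ (A ^ k) i l * (A + B) l j + (B ^ k) i l * (A + B) l j :=
        add_le_add
          (mul_le_mul_of_nonneg_left (le_add_of_nonneg_right (hB l j)) (pow_apply_nonneg hA k i l))
          (mul_le_mul_of_nonneg_left (le_add_of_nonneg_left (hA l j)) (pow_apply_nonneg hB k i l))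
      _ = ((A ^ k) i l + (B ^ k) i l) * (A + B) l j := (add_mul _ _ _).symm
      _ ≤ ((A + B) ^ k) i l * (A + B) l j :=
        mul_le_mul_of_nonneg_right (ih (by lia) i l) (hAB l j)

lemma exists_pow_apply_pos_of_transGen [Semiring R] [PartialOrder R] [IsStrictOrderedRing R]
    {A : Matrix m m R} (hA : ∀ i j, 0 ≤ A i j) {i j : m}
    (h : TransGen (fun i j ↦ 0 < A i j) i j) : ∃ k ≠ 0, 0 < (A ^ k) i j := by
  induction h with
  | single hij => exact ⟨1, one_ne_zero, by simpa using hij⟩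
  | @tail l j _ hlj ih =>
    obtain ⟨k, -, hk⟩ := ih
    refine ⟨k + 1, k.succ_ne_zero, ?_⟩
    rw [pow_succ, mul_apply]
    exact Finset.sum_pos' (fun t _ ↦ mul_nonneg (pow_apply_nonneg hA k i t) (hA t j))
      ⟨l, Finset.mem_univ l, mul_pos hk hlj⟩

variable [CommRing R] [LinearOrder R] [IsStrictOrderedRing R] {d : m → R} {A : Matrix m m R}

lemma trace_pow_nonpos_of_charpoly_diagonal_sub_eq (hA : ∀ i j, 0 ≤ A i j)
    (h : (diagonal d - A).charpoly = (diagonal d).charpoly) {k : ℕ} (hk : k ≠ 0) :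
    (A ^ k).trace ≤ 0 := by
  obtain ⟨c, hc⟩ := (Set.finite_range d).bddAbove
  let E : Matrix m m R := diagonal fun i ↦ c - d i
  have hE : ∀ i j, 0 ≤ E i j := fun i j ↦ by
    simp only [E, diagonal_apply]
    split_ifs
    · exact sub_nonneg.2 (hc ⟨i, rfl⟩)
    · exact le_rfl
  have aeval_diagonal : aeval (diagonal d) (C c - X) = E := by
    simp [E, algebraMap_eq_diagonal, Pi.algebraMap_def]
  have aeval_diagonal_sub : aeval (diagonal d - A) (C c - X) = E + A := by
    rw [← aeval_diagonal]
    simp only [map_sub, aeval_C, aeval_X]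
    abel
  have trace_eq : ((E + A) ^ k).trace = (E ^ k).trace := by
    have trace_aeval_eq := trace_aeval_eq_of_charpoly_eq h ((C c - X) ^ k)
    rwa [map_pow, map_pow, aeval_diagonal, aeval_diagonal_sub] at trace_aeval_eq
  have trace_le : (E ^ k).trace + (A ^ k).trace ≤ ((E + A) ^ k).trace := by
    simp only [trace, diag_apply, ← Finset.sum_add_distrib]
    exact Finset.sum_le_sum fun i _ ↦ pow_add_pow_apply_le hE hA hk i i
  rwa [trace_eq, add_le_iff_nonpos_right] at trace_le

theorem charpoly_eq_prod_outDegrees_iff_acyclic_general (hA : ∀ i j, 0 ≤ A i j) :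
    (diagonal d - A).charpoly = ∏ i, (X - C (d i)) ↔
      ∀ i, ¬ TransGen (fun i j ↦ 0 < A i j) i i := by
  constructor
  · intro h i hi
    rw [← charpoly_diagonal] at h
    obtain ⟨k, hk, hpos⟩ := exists_pow_apply_pos_of_transGen hA hi
    have trace_pos : 0 < (A ^ k).trace :=
      Finset.sum_pos' (fun j _ ↦ pow_apply_nonneg hA k j j) ⟨i, Finset.mem_univ i, hpos⟩
    exact trace_pos.not_ge (trace_pow_nonpos_of_charpoly_diagonal_sub_eq hA h hk)
  · intro h
    have hdiag : ∀ i, A i i = 0 := fun i ↦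
      ((hA i i).eq_or_lt.resolve_right fun hi ↦ h i (.single hi)).symm
    have hoff : ∀ i j, i ≠ j → (diagonal d - A) i j ≠ 0 → 0 < A i j := fun i j hij hne ↦
      (hA i j).lt_of_ne' (by simpa [hij] using hne)
    simpa [hdiag] using charpoly_eq_prod_diag_of_acyclic h hoff

end Nonneg

lemma isAcyclic_iff_not_transGen {n : ℕ} {w : Fin n → Fin n → ℝ} :
    IsAcyclic w ↔ ∀ i, ¬ TransGen (fun i j ↦ 0 < w i j) i i := by
  simp only [IsAcyclic, transGen_iff_exists_seq]
  exact ⟨fun h i ⟨k, x, hk, hx₀, hxk, hx⟩ ↦ h ⟨k, x, hk, hxk.trans hx₀.symm, hx⟩,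
    fun h ⟨k, x, hk, hxk, hx⟩ ↦ h (x 0) ⟨k, x, hk, rfl, hxk, hx⟩⟩

/-- The eigenvalues of the graph Laplacian (with multiplicity) are exactly the
out-degrees of the vertices if and only if the digraph is acyclic. -/
theorem charpoly_eq_prod_outDegrees_iff_acyclic (n : ℕ) (hn : 1 ≤ n)
    (w : Fin n → Fin n → ℝ) (hw : ∀ i j, 0 ≤ w i j) (hdiag : ∀ i, w i i = 0) :
    (graphLaplacian w).charpoly = ∏ i : Fin n, (X - C (∑ j, w i j)) ↔ IsAcyclic w := by
  exact (charpoly_eq_prod_outDegrees_iff_acyclic_general hw).trans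
    isAcyclic_iff_not_transGen.symm
end

section
/- Let a weighted digraph on n ≥ 1 vertices have all weights satisfying 0 ≤ w i j ≤ 1, with graph Laplacian L. Then the digraph is a complete dominance graph if and only if both: (a) the characteristic polynomial of L equals ∏_{k=0}^{n−1} (X − C(k)), and (b) there exists a permutation σ : Fin n ≃ Fin n with d⁺(σ k) = n − 1 − k for every k. (That is, the eigenvalues of L equal the out-degrees of the vertices and these are exactly n−1, n−2, …, 1, 0.) -/
open Matrix Polynomial

/-- A complete dominance graph: all weights are 0 or 1, for each pair of distinct
vertices exactly one of the two opposite edges has weight 1, and the digraph is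
acyclic (an acyclic tournament with unit weights). -/
def IsCompleteDominanceGraph {n : ℕ} (w : Fin n → Fin n → ℝ) : Prop :=
  (∀ i j, w i j = 0 ∨ w i j = 1) ∧
  (∀ i j : Fin n, i ≠ j → Xor' (w i j = 1) (w j i = 1)) ∧
  IsAcyclic w

/-!
A complete dominance graph is a linear order on its vertices, so listing the vertices in that order
makes the Laplacian upper triangular with diagonal `n - 1, …, 1, 0`.

Conversely, the spectrum determines `tr L² = ∑ k²`, whereas a direct computation gives
`tr L² = ∑ d⁺(i)² + ∑ w i j * w j i`. As the out-degrees are the eigenvalues, the last sum vanishes,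
so no two vertices are joined in both directions. Now go through the vertices by decreasing
out-degree: the `k`-th one receives weight `1` from all its predecessors, hence sends them nothing,
and its out-degree `n - 1 - k` forces weight `1` towards each of the remaining `n - 1 - k` vertices.
-/

section TraceOfSquare

variable {m R : Type*} [Fintype m] [DecidableEq m] [CommRing R]

-- `t² - M² = (t - M) (t + M)` and `det (t + M) = (-1)ⁿ det (-t - M)`.
theorem eval_sq_charpoly_sq (M : Matrix m m R) (t : R) :
    (M ^ 2).charpoly.eval (t ^ 2) =
      M.charpoly.eval t * ((-1) ^ Fintype.card m * M.charpoly.eval (-t)) := by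
  have hcomm : Commute (scalar m t) M := scalar_commute t (fun _ => Commute.all _ _) M
  have hneg : scalar m t + M = -(scalar m (-t) - M) := by rw [map_neg]; abel
  simp only [eval_charpoly]
  rw [map_pow, hcomm.sq_sub_sq, det_mul, mul_comm, hneg, det_neg]

theorem expand_two_charpoly_sq (M : Matrix m m R) :
    expand R 2 (M ^ 2).charpoly =
      M.charpoly * ((-1) ^ Fintype.card m * M.charpoly.comp (-X)) := by
  have h := eval_sq_charpoly_sq (M.map (C : R →+* R[X])) X
  rw [← Matrix.map_pow] at h
  simpa only [charpoly_map, eval_map, eval₂_C_X, expand_eq_comp_X_pow, Polynomial.comp] using h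

theorem charpoly_sq_congr {M N : Matrix m m R} (h : M.charpoly = N.charpoly) :
    (M ^ 2).charpoly = (N ^ 2).charpoly :=
  expand_injective two_pos (by simp only [expand_two_charpoly_sq, h])

theorem trace_sq_eq_of_charpoly_eq_prod {M : Matrix m m R} {a : m → R}
    (h : M.charpoly = ∏ i, (X - C (a i))) : (M ^ 2).trace = ∑ i, a i ^ 2 := by
  cases isEmpty_or_nonempty m
  · simp [trace]
  calc (M ^ 2).trace = (diagonal a ^ 2).trace := by
        rw [trace_eq_neg_charpoly_nextCoeff, trace_eq_neg_charpoly_nextCoeff,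
          charpoly_sq_congr (h.trans (charpoly_diagonal a).symm)]
    _ = ∑ i, a i ^ 2 := by simp [diagonal_pow]

theorem trace_diagonal_sub_sq (d : m → R) {A : Matrix m m R} (hA : ∀ i, A i i = 0) :
    ((diagonal d - A) ^ 2).trace = ∑ i, d i ^ 2 + (A * A).trace := by
  have hdA : (diagonal d * A).trace = 0 := by simp [trace, hA]
  have hAd : (A * diagonal d).trace = 0 := by rw [trace_mul_comm, hdA]
  rw [sq, sub_mul, mul_sub, mul_sub]
  simp only [trace_sub, hdA, hAd, diagonal_mul_diagonal, trace_diagonal, sq]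
  ring

end TraceOfSquare

theorem mul_swap_eq_zero_of_trace_mul_self {m R : Type*} [Fintype m] [Semiring R] [PartialOrder R]
    [IsOrderedRing R] {A : Matrix m m R} (hA : ∀ i j, 0 ≤ A i j) (htr : (A * A).trace = 0)
    (i j : m) : A i j * A j i = 0 := by
  have hnonneg : ∀ i j, 0 ≤ A i j * A j i := fun i j => mul_nonneg (hA i j) (hA j i)
  have hrow : ∑ j, A i j * A j i = 0 :=
    (Finset.sum_eq_zero_iff_of_nonneg fun i _ => Finset.sum_nonneg fun j _ => hnonneg i j).mp
      htr i (Finset.mem_univ i)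
  exact (Finset.sum_eq_zero_iff_of_nonneg fun j _ => hnonneg i j).mp hrow j (Finset.mem_univ j)

theorem eq_ite_lt_of_sum_eq_card_Ioi {α R : Type*} [Fintype α] [LinearOrder α]
    [LocallyFiniteOrderTop α] [Semiring R] [PartialOrder R] [IsOrderedCancelAddMonoid R]
    {u : α → α → R} (hle : ∀ i j, u i j ≤ 1) (hdiag : ∀ i, u i i = 0)
    (hmul : ∀ i j, u i j * u j i = 0)
    (hsum : ∀ i, ∑ j, u i j = (Finset.Ioi i).card) (i j : α) :
    u i j = if i < j then 1 else 0 := by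
  induction i using WellFoundedLT.induction generalizing j with
  | ind i ih =>
    have hbound : ∀ j ∈ Finset.univ, u i j ≤ if i < j then 1 else 0 := by
      intro j _
      rcases lt_trichotomy i j with hij | rfl | hji
      · simpa only [if_pos hij] using hle i j
      · simp only [hdiag, lt_irrefl, if_false, le_refl]
      · have hback : u j i = 1 := by rw [ih j hji i, if_pos hji]
        have hzero : u i j = 0 := by simpa only [hback, mul_one] using hmul i j
        rw [hzero, if_neg hji.not_gt]
    have hrow : ∑ j, u i j = ∑ j, if i < j then 1 else 0 := by
      rw [hsum, Finset.sum_boole, Finset.filter_lt_eq_Ioi]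
    exact (Finset.sum_eq_sum_iff_of_le hbound).mp hrow j (Finset.mem_univ j)

theorem natCast_val_rev {R : Type*} [Ring R] {n : ℕ} (k : Fin n) :
    ((k.rev : ℕ) : R) = n - 1 - (k : ℕ) := by
  rw [Fin.val_rev, Nat.cast_sub k.isLt]
  push_cast
  abel

theorem card_Ioi_eq_val_rev {n : ℕ} (k : Fin n) : (Finset.Ioi k).card = k.rev := by
  rw [Fin.card_Ioi, Fin.val_rev]
  omega

theorem nonempty_relIso_fin_lt {α : Type*} [Fintype α] {n : ℕ} (hn : Fintype.card α = n)
    (r : α → α → Prop) [IsStrictTotalOrder α r] :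
    Nonempty (((· < ·) : Fin n → Fin n → Prop) ≃r r) := by
  classical
  let := linearOrderOfSTO r
  exact ⟨(monoEquivOfFin α hn).toRelIsoLT⟩

section Dominance

variable {n : ℕ} {w : Fin n → Fin n → ℝ}

theorem isAcyclic_of_forall_pos_lt {α : Type*} [Preorder α] (f : Fin n → α)
    (hf : ∀ i j, 0 < w i j → f i < f j) : IsAcyclic w := by
  rintro ⟨k, x, hk, hclosed, hpos⟩
  have hmono : StrictMonoOn (fun t => f (x t)) (Set.Iic k) :=
    strictMonoOn_Iic_of_lt_succ fun t ht => hf _ _ (hpos t ht)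
  have hlt : f (x 0) < f (x k) := hmono (Set.mem_Iic.mpr k.zero_le) Set.self_mem_Iic hk
  exact hlt.ne (congrArg f hclosed.symm)

theorem IsAcyclic.not_pos_of_pos_of_pos (h : IsAcyclic w) {i j k : Fin n} (hij : 0 < w i j)
    (hjk : 0 < w j k) : ¬ 0 < w k i := by
  intro hki
  refine h ⟨3, fun t => ![i, j, k, i] (Fin.ofNat 4 t), by norm_num, rfl, fun t ht => ?_⟩
  interval_cases t
  exacts [hij, hjk, hki]

theorem IsCompleteDominanceGraph.isStrictTotalOrder (h : IsCompleteDominanceGraph w) :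
    IsStrictTotalOrder (Fin n) (fun i j => w i j = 1) := by
  obtain ⟨-, htour, hacyc⟩ := h
  have hpos : ∀ {i j}, w i j = 1 → 0 < w i j := fun hij => hij ▸ one_pos
  have hirrefl : ∀ i, w i i ≠ 1 := fun i hi =>
    hacyc.not_pos_of_pos_of_pos (hpos hi) (hpos hi) (hpos hi)
  have htotal : ∀ i j, i ≠ j → w i j = 1 ∨ w j i = 1 := fun i j hij => Xor.or (htour i j hij)
  exact
    { irrefl := hirrefl
      trichotomous := fun i j hij hji => by
        by_contra hne
        exact (htotal i j hne).elim hij hji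
      trans := fun i j k hij hjk => by
        rcases eq_or_ne i k with rfl | hik
        · have hne : i ≠ j := fun heq => hirrefl i (heq ▸ hij)
          exact ((xor_iff_or_and_not_and _ _).mp (htour i j hne)).2.elim ⟨hij, hjk⟩
        · exact (htotal i k hik).resolve_right fun hki =>
            hacyc.not_pos_of_pos_of_pos (hpos hij) (hpos hjk) (hpos hki) }

/-- The permutation `σ` lists the vertices as `σ 0, σ 1, …` in such a way that each of them sends
weight `1` to every later vertex and weight `0` to itself and to every earlier one. -/
def IsDominanceOrder (w : Fin n → Fin n → ℝ) (σ : Equiv.Perm (Fin n)) : Prop :=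
  ∀ i j, w (σ i) (σ j) = if i < j then 1 else 0

theorem IsCompleteDominanceGraph.exists_isDominanceOrder (h : IsCompleteDominanceGraph w) :
    ∃ σ, IsDominanceOrder w σ := by
  have := h.isStrictTotalOrder
  obtain ⟨e⟩ := nonempty_relIso_fin_lt (Fintype.card_fin n) (fun i j => w i j = 1)
  refine ⟨e.toEquiv, fun i j => ?_⟩
  have hiff : w (e i) (e j) = 1 ↔ i < j := e.map_rel_iff
  split_ifs with hij
  · exact hiff.mpr hij
  · exact (h.1 _ _).resolve_right (mt hiff.mp hij)

namespace IsDominanceOrder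

variable {σ : Equiv.Perm (Fin n)}

theorem apply_eq_ite (h : IsDominanceOrder w σ) (i j : Fin n) :
    w i j = if σ.symm i < σ.symm j then 1 else 0 := by
  simpa only [Equiv.apply_symm_apply] using h (σ.symm i) (σ.symm j)

theorem isCompleteDominanceGraph (h : IsDominanceOrder w σ) : IsCompleteDominanceGraph w := by
  refine ⟨fun i j => ?_, fun i j hij => ?_, isAcyclic_of_forall_pos_lt σ.symm fun i j hpos => ?_⟩
  · rw [h.apply_eq_ite]
    exact (ite_eq_or_eq _ _ _).symm
  · rw [h.apply_eq_ite i j, h.apply_eq_ite j i]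
    rcases lt_or_gt_of_ne (σ.symm.injective.ne hij) with hlt | hlt
    · exact Or.inl (by simp [hlt, hlt.not_gt])
    · exact Or.inr (by simp [hlt, hlt.not_gt])
  · by_contra hlt
    rw [h.apply_eq_ite, if_neg hlt] at hpos
    exact hpos.false

theorem sum_eq (h : IsDominanceOrder w σ) (k : Fin n) : ∑ j, w (σ k) j = (k.rev : ℕ) := by
  rw [← Equiv.sum_comp σ, Finset.sum_congr rfl fun j _ => h k j, Finset.sum_boole,
    Finset.filter_lt_eq_Ioi, card_Ioi_eq_val_rev]

theorem charpoly_graphLaplacian (h : IsDominanceOrder w σ) :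
    (graphLaplacian w).charpoly = ∏ k : Fin n, (X - C ((k : ℕ) : ℝ)) := by
  have hdiag : ∀ k, reindex σ.symm σ.symm (graphLaplacian w) k k = (k.rev : ℕ) := fun k => by
    simp [graphLaplacian, h.sum_eq, h k k]
  have htri : (reindex σ.symm σ.symm (graphLaplacian w)).IsUpperTriangular := fun i j hji => by
    have hlt : j < i := hji
    simp [graphLaplacian, h i j, hlt.ne', hlt.not_gt]
  rw [← charpoly_reindex σ.symm, charpoly_of_isUpperTriangular _ htri]
  simp only [hdiag]
  exact Equiv.prod_comp Fin.revPerm fun k : Fin n => X - C ((k : ℕ) : ℝ)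

end IsDominanceOrder

theorem trace_mul_self_eq_zero_of_charpoly_graphLaplacian (hdiag : ∀ i, w i i = 0) {a : Fin n → ℝ}
    (hchar : (graphLaplacian w).charpoly = ∏ k, (X - C (a k))) (e : Equiv.Perm (Fin n))
    (hdeg : ∀ k, ∑ j, w (e k) j = a k) : (of w * of w).trace = 0 := by
  have hsq : ∑ i, (∑ j, w i j) ^ 2 = ∑ k, a k ^ 2 := by
    rw [← Equiv.sum_comp e]
    simp only [hdeg]
  have htrace : ∑ i, (∑ j, w i j) ^ 2 + (of w * of w).trace = ∑ k, a k ^ 2 := by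
    rw [← trace_diagonal_sub_sq (A := of w) _ hdiag]
    exact trace_sq_eq_of_charpoly_eq_prod hchar
  linarith

theorem isDominanceOrder_of_charpoly_of_sum_eq (hw0 : ∀ i j, 0 ≤ w i j) (hw1 : ∀ i j, w i j ≤ 1)
    (hdiag : ∀ i, w i i = 0)
    (hchar : (graphLaplacian w).charpoly = ∏ k : Fin n, (X - C ((k : ℕ) : ℝ)))
    {σ : Equiv.Perm (Fin n)} (hdeg : ∀ k, ∑ j, w (σ k) j = (k.rev : ℕ)) :
    IsDominanceOrder w σ := by
  have htrace : (of w * of w).trace = 0 :=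
    trace_mul_self_eq_zero_of_charpoly_graphLaplacian hdiag hchar (Fin.revPerm.trans σ)
      fun k => by simpa using hdeg k.rev
  refine eq_ite_lt_of_sum_eq_card_Ioi (fun _ _ => hw1 _ _) (fun _ => hdiag _)
    (fun _ _ => mul_swap_eq_zero_of_trace_mul_self hw0 htrace _ _) fun i => ?_
  rw [Equiv.sum_comp σ (w (σ i)), hdeg, card_Ioi_eq_val_rev]

end Dominance

/-- Spectral-degree characterization of complete dominance graphs: a weighted digraph
with weights in `[0, 1]` is a complete dominance graph if and only if the eigenvalues of
its Laplacian equal the out-degrees of the vertices and these are `n-1, n-2, …, 1, 0`. -/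
theorem completeDominance_iff_spectralDegree (n : ℕ) (hn : 1 ≤ n)
    (w : Fin n → Fin n → ℝ) (hw0 : ∀ i j, 0 ≤ w i j) (hw1 : ∀ i j, w i j ≤ 1)
    (hdiag : ∀ i, w i i = 0) :
    IsCompleteDominanceGraph w ↔
      ((graphLaplacian w).charpoly = ∏ k : Fin n, (X - C ((k : ℕ) : ℝ)) ∧
        ∃ σ : Equiv.Perm (Fin n),
          ∀ k : Fin n, ∑ j, w (σ k) j = (n : ℝ) - 1 - (k : ℕ)) := by
  simp only [← natCast_val_rev]
  constructor
  · intro h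
    obtain ⟨σ, hσ⟩ := h.exists_isDominanceOrder
    exact ⟨hσ.charpoly_graphLaplacian, σ, hσ.sum_eq⟩
  · rintro ⟨hchar, σ, hdeg⟩
    exact (isDominanceOrder_of_charpoly_of_sum_eq hw0 hw1 hdiag hchar hdeg).isCompleteDominanceGraph
end

section
/- Let L be the standard dominance Laplacian on n vertices and let i : Fin n with i + 1 < n. Define the unit vectors v̂_i = (1/√(i+1)) · ∑_{k ≤ i} e_k and ŵ_i = (1/√2) · (e_i − e_{i+1}) in ℝⁿ. Then v̂_i is a right eigenvector and ŵ_i a left eigenvector of L for the eigenvalue n − 1 − i (i.e., L *ᵥ v̂_i = (n−1−i) • v̂_i and ŵ_i ᵥ* L = (n−1−i) • ŵ_i), both have Euclidean norm 1, and the eigenvalue condition number κ = 1/|⟨ŵ_i, v̂_i⟩| satisfies κ = √(2(i+1)). -/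
open Matrix Polynomial

/-- The standard dominance Laplacian on `n` vertices: the graph Laplacian of the complete
dominance graph with the vertices in their natural order. -/
def stdDomLaplacian (n : ℕ) : Matrix (Fin n) (Fin n) ℝ :=
  Matrix.of fun i j =>
    if i = j then (n : ℝ) - 1 - (i : ℕ) else if i < j then -1 else 0

/-!
Acting on a column vector, the Laplacian gives `(L x) j = ∑ k > j, (x j - x k)`. For `x` the
indicator of `{k ≤ i}` this vanishes when `j > i`, and when `j ≤ i` it counts the `n - 1 - i`
indices above `i`. On the left, `e_i - e_{i+1}` picks out the difference of two consecutive rows of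
`L`, which agree except in columns `i` and `i + 1`. The condition number of a normalized pair is
`‖w‖ ‖v‖ / |⟨w, v⟩|`, so it remains to evaluate three inner products of the unnormalized vectors.
-/

section Normalization

variable {ι : Type*} [Fintype ι] {v w : ι → ℝ} {s t : ℝ}

lemma sqrt_sum_sq_one_div_sqrt_smul (hs : 0 < s) (hv : v ⬝ᵥ v = s) :
    √(∑ k, ((1 / √s) • v) k ^ 2) = 1 := by
  have sum_sq_eq : ∑ k, ((1 / √s) • v) k ^ 2 = (1 / √s) ^ 2 * (v ⬝ᵥ v) := by
    simp only [Pi.smul_apply, smul_eq_mul, mul_pow, dotProduct, Finset.mul_sum, ← sq]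
  rw [sum_sq_eq, hv, div_pow, one_pow, Real.sq_sqrt hs.le, one_div_mul_cancel hs.ne',
    Real.sqrt_one]

lemma one_div_abs_dotProduct_one_div_sqrt_smul (hs : 0 ≤ s) :
    1 / |((1 / √s) • w) ⬝ᵥ ((1 / √t) • v)| = √(s * t) / |w ⬝ᵥ v| := by
  have abs_dotProduct_eq :
      |((1 / √s) • w) ⬝ᵥ ((1 / √t) • v)| = |w ⬝ᵥ v| / √(s * t) := by
    rw [smul_dotProduct, dotProduct_smul, smul_eq_mul, smul_eq_mul, abs_mul, abs_mul,
      abs_of_nonneg (by positivity : 0 ≤ 1 / √s), abs_of_nonneg (by positivity : 0 ≤ 1 / √t),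
      Real.sqrt_mul hs]
    ring
  rw [abs_dotProduct_eq, one_div_div]

end Normalization

section DotProduct

variable {ι R : Type*} [Fintype ι]

lemma indicator_Iic_dotProduct_self [NonAssocSemiring R] [Preorder ι] [LocallyFiniteOrderBot ι]
    (i : ι) :
    (Set.Iic i).indicator (1 : ι → R) ⬝ᵥ (Set.Iic i).indicator 1 = (Finset.Iic i).card := by
  classical
  simp [dotProduct, Set.indicator_apply, ← ite_and, ← Finset.filter_ge_eq_Iic]

variable [NonAssocRing R] [DecidableEq ι] {i j : ι}

lemma single_sub_single_dotProduct_self (hij : i ≠ j) :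
    (Pi.single i 1 - Pi.single j 1 : ι → R) ⬝ᵥ (Pi.single i 1 - Pi.single j 1) = 2 := by
  simp [hij, hij.symm, one_add_one_eq_two]

lemma single_sub_single_dotProduct_indicator_Iic [Preorder ι] (hij : i < j) :
    (Pi.single i 1 - Pi.single j 1 : ι → R) ⬝ᵥ (Set.Iic i).indicator 1 = 1 := by
  simp [sub_dotProduct, hij.not_ge]

end DotProduct

section StdDomLaplacian

variable {n : ℕ}

lemma cast_card_Ioi_fin (i : Fin n) : ((Finset.Ioi i).card : ℝ) = (n : ℝ) - 1 - (i : ℕ) := by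
  rw [Fin.card_Ioi, Nat.sub_sub, Nat.cast_sub (by lia)]
  push_cast
  ring

lemma stdDomLaplacian_mulVec_apply (x : Fin n → ℝ) (j : Fin n) :
    (stdDomLaplacian n *ᵥ x) j = ∑ k ∈ Finset.Ioi j, (x j - x k) := by
  have entry_mul (k : Fin n) : stdDomLaplacian n j k * x k =
      (if j = k then ((n : ℝ) - 1 - (j : ℕ)) * x k else 0) - if j < k then x k else 0 := by
    simp only [stdDomLaplacian, of_apply]
    grind
  calc (stdDomLaplacian n *ᵥ x) j
      = ((n : ℝ) - 1 - (j : ℕ)) * x j - ∑ k ∈ Finset.Ioi j, x k := by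
        simp only [mulVec, dotProduct, entry_mul, Finset.sum_sub_distrib, Finset.sum_ite_eq,
          Finset.mem_univ, if_true, ← Finset.sum_filter, Finset.filter_lt_eq_Ioi]
    _ = ∑ k ∈ Finset.Ioi j, (x j - x k) := by
        rw [Finset.sum_sub_distrib, Finset.sum_const, nsmul_eq_mul, cast_card_Ioi_fin]

lemma stdDomLaplacian_mulVec_indicator_Iic (i : Fin n) :
    stdDomLaplacian n *ᵥ (Set.Iic i).indicator 1 =
      ((n : ℝ) - 1 - (i : ℕ)) • (Set.Iic i).indicator 1 := by
  ext j
  rw [stdDomLaplacian_mulVec_apply, Pi.smul_apply, smul_eq_mul]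
  rcases le_or_gt j i with hji | hij
  · have Ioi_filter : {k ∈ Finset.Ioi j | i < k} = Finset.Ioi i := by
      grind
    calc ∑ k ∈ Finset.Ioi j, ((Set.Iic i).indicator 1 j - (Set.Iic i).indicator 1 k)
        = ∑ k ∈ Finset.Ioi j, if i < k then (1 : ℝ) else 0 := by
          refine Finset.sum_congr rfl fun k _ => ?_
          rcases le_or_gt k i with hki | hik
          · simp [hji, hki, hki.not_gt]
          · simp [hji, hik, hik.not_ge]
      _ = (n : ℝ) - 1 - (i : ℕ) := by
          rw [Finset.sum_boole, Ioi_filter, cast_card_Ioi_fin]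
      _ = ((n : ℝ) - 1 - (i : ℕ)) * (Set.Iic i).indicator 1 j := by
          simp [hji]
  · rw [Set.indicator_of_notMem (by simpa using hij), mul_zero]
    refine Finset.sum_eq_zero fun k hk => ?_
    have hik : i < k := hij.trans (Finset.mem_Ioi.mp hk)
    simp [hik.not_ge]

lemma stdDomLaplacian_row_sub_row_of_covBy {i j : Fin n} (hij : i ⋖ j) :
    (stdDomLaplacian n).row i - (stdDomLaplacian n).row j =
      ((n : ℝ) - 1 - (i : ℕ)) • (Pi.single i 1 - Pi.single j 1) := by
  have hj : (j : ℝ) = i + 1 := by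
    have hj_nat : (i : ℕ) + 1 = j := by simpa using hij
    exact_mod_cast hj_nat.symm
  ext k
  rcases lt_or_ge i k with hik | hki
  · rcases (hij.ge_of_gt hik).eq_or_lt with rfl | hjk
    · simp only [stdDomLaplacian, row_apply, of_apply, Pi.sub_apply, Pi.smul_apply,
        Pi.single_apply, smul_eq_mul, hik, hik.ne, hik.ne', if_true, if_false, hj]
      ring
    · simp [stdDomLaplacian, hik, hik.ne, hik.ne', hjk, hjk.ne, hjk.ne']
  · have hkj : k < j := hki.trans_lt hij.lt
    rcases hki.eq_or_lt with rfl | hki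
    · simp [stdDomLaplacian, hkj.ne, hkj.ne', hkj.not_gt]
    · simp [stdDomLaplacian, hki.ne, hki.ne', hki.not_gt, hkj.ne, hkj.ne', hkj.not_gt]

lemma single_sub_single_vecMul_stdDomLaplacian {i j : Fin n} (hij : i ⋖ j) :
    (Pi.single i 1 - Pi.single j 1) ᵥ* stdDomLaplacian n =
      ((n : ℝ) - 1 - (i : ℕ)) • (Pi.single i 1 - Pi.single j 1) := by
  rw [sub_vecMul, single_one_vecMul, single_one_vecMul, stdDomLaplacian_row_sub_row_of_covBy hij]

end StdDomLaplacian

/-- For the standard dominance Laplacian, the unit vectors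
`v̂_i = (1/√(i+1)) ∑_{k ≤ i} e_k` and `ŵ_i = (1/√2)(e_i − e_{i+1})` are right and left
eigenvectors for the eigenvalue `n − 1 − i`, both have Euclidean norm 1, and the
condition number `κ = 1/|⟨ŵ_i, v̂_i⟩|` equals `√(2(i+1))`. -/
theorem stdDomLaplacian_eigenvectors_and_condition_number (n : ℕ) (i : Fin n)
    (hi : (i : ℕ) + 1 < n) (v u : Fin n → ℝ)
    (hv : v = fun k => if k ≤ i then 1 / Real.sqrt ((i : ℕ) + 1) else 0)
    (hu : u = fun k =>
      (1 / Real.sqrt 2) * (if k = i then 1 else if (k : ℕ) = (i : ℕ) + 1 then -1 else 0)) :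
    stdDomLaplacian n *ᵥ v = ((n : ℝ) - 1 - (i : ℕ)) • v ∧
    u ᵥ* stdDomLaplacian n = ((n : ℝ) - 1 - (i : ℕ)) • u ∧
    Real.sqrt (∑ k, v k ^ 2) = 1 ∧
    Real.sqrt (∑ k, u k ^ 2) = 1 ∧
    1 / |∑ k, u k * v k| = Real.sqrt (2 * ((i : ℕ) + 1)) := by
  let j : Fin n := ⟨i + 1, hi⟩
  have hij : i ⋖ j := by simp [j]
  have v_eq : v = (1 / √((i : ℕ) + 1)) • (Set.Iic i).indicator 1 := by
    ext k
    simp [hv, Set.indicator_apply]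
  have u_eq : u = (1 / √2) • (Pi.single i 1 - Pi.single j 1) := by
    ext k
    simp only [hu, j, Pi.smul_apply, Pi.sub_apply, Pi.single_apply, smul_eq_mul, Fin.ext_iff]
    grind
  rw [v_eq, u_eq, mulVec_smul, smul_vecMul]
  refine ⟨?_, ?_, ?_, ?_, ?_⟩
  · rw [stdDomLaplacian_mulVec_indicator_Iic, smul_comm]
  · rw [single_sub_single_vecMul_stdDomLaplacian hij, smul_comm]
  · exact sqrt_sum_sq_one_div_sqrt_smul (by positivity) (by simp [indicator_Iic_dotProduct_self])
  · exact sqrt_sum_sq_one_div_sqrt_smul two_pos (single_sub_single_dotProduct_self hij.ne)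
  · rw [← dotProduct, one_div_abs_dotProduct_one_div_sqrt_smul two_pos.le,
      single_sub_single_dotProduct_indicator_Iic hij.lt, abs_one, div_one]
end

section
/- Let A be an n×n complex matrix and λ : Fin n → ℂ with charpoly(A) = ∏_{j} (X − C(λ j)). Let 1 ≤ k ≤ n and let w₁, …, w_k ∈ ℂⁿ be left eigenvectors of A for λ₁, …, λ_k respectively (star(w_j) ᵥ* A = λ_j • star(w_j) for j = 1, …, k). Let x ∈ ℂⁿ be perpendicular to w₂, …, w_k, i.e., ⟨w_j, x⟩ = 0 for j = 2, …, k, where ⟨w, x⟩ = ∑_i conj(w_i) x_i. Then the characteristic polynomial of the rank-one update A + B, where B is the matrix with entries B p q = x_p · conj((w₁ + ⋯ + w_k)_q), equals (X − C(λ₁ + ⟨w₁, x⟩)) · ∏_{j=2}^{n} (X − C(λ_j)). -/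
open Matrix Polynomial

/-!
If `v` is a left eigenvector of `A` for `μ`, then over `R[X]`
`(X - μ) • (X - A - x vᵀ) = ((X - μ) - x vᵀ) (X - A)`.
Taking determinants, `A + x vᵀ` has the spectrum of `A` with `μ` replaced by `μ + v ⬝ᵥ x`; in
particular nothing changes when `v ⬝ᵥ x = 0`. A left eigenvector `v` with `v ⬝ᵥ x = 0` moreover
stays one after every update along `x`, as `vᵀ (A + x uᵀ) = vᵀ A`. So `x (v₁ + ⋯ + v_k)ᵀ` can be
added one summand at a time, starting with `x v₁ᵀ`, the only summand that moves an eigenvalue.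
-/

section CommRing

variable {R n κ : Type*} [CommRing R] [Fintype n]

theorem vecMul_add_vecMulVec_of_dotProduct_eq_zero {v x : n → R} (hvx : v ⬝ᵥ x = 0)
    (A : Matrix n n R) (u : n → R) : v ᵥ* (A + vecMulVec x u) = v ᵥ* A := by
  rw [vecMul_add, vecMul_vecMulVec, hvx, zero_smul, add_zero]

variable [DecidableEq n]

theorem mul_det_scalar_sub_vecMulVec (r : R) (x v : n → R) :
    r * (scalar n r - vecMulVec x v).det = r ^ Fintype.card n * (r - v ⬝ᵥ x) := by
  rw [← eval_charpoly, charpoly_vecMulVec, dotProduct_comm x v]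
  cases isEmpty_or_nonempty n
  · simp
  · have card_pow : r * r ^ (Fintype.card n - 1) = r ^ Fintype.card n :=
      mul_pow_sub_one Fintype.card_ne_zero r
    simp only [eval_sub, eval_smul, eval_pow, eval_X, smul_eq_mul]
    linear_combination (-(v ⬝ᵥ x)) * card_pow

theorem mul_det_sub_vecMulVec_of_vecMul_eq_smul {M : Matrix n n R} {r : R} (hr : IsLeftRegular r)
    {v : n → R} (hv : v ᵥ* M = r • v) (x : n → R) :
    r * (M - vecMulVec x v).det = (r - v ⬝ᵥ x) * M.det := by
  have factorization : r • (M - vecMulVec x v) = (scalar n r - vecMulVec x v) * M := by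
    rw [sub_mul, vecMulVec_mul, hv, vecMulVec_smul, smul_sub, scalar_apply,
      ← smul_eq_diagonal_mul]
  apply hr.pow (Fintype.card n)
  calc r ^ Fintype.card n * (r * (M - vecMulVec x v).det)
      = r * (r • (M - vecMulVec x v)).det := by rw [det_smul]; ring
    _ = r * (scalar n r - vecMulVec x v).det * M.det := by rw [factorization, det_mul, mul_assoc]
    _ = r ^ Fintype.card n * ((r - v ⬝ᵥ x) * M.det) := by
      rw [mul_det_scalar_sub_vecMulVec, mul_assoc]

theorem charmatrix_add_vecMulVec (A : Matrix n n R) (x v : n → R) :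
    charmatrix (A + vecMulVec x v) = charmatrix A - vecMulVec (C ∘ x) (C ∘ v) := by
  ext1 i j
  simp only [charmatrix_apply, Matrix.add_apply, Matrix.sub_apply, vecMulVec_apply,
    Function.comp_apply, C_add, C_mul, sub_sub]

theorem vecMul_charmatrix_of_vecMul_eq_smul {A : Matrix n n R} {μ : R} {v : n → R}
    (hv : v ᵥ* A = μ • v) : (C ∘ v) ᵥ* charmatrix A = (X - C μ) • (C ∘ v) := by
  have hCv : (C ∘ v) ᵥ* A.map C = C μ • (C ∘ v) := by
    ext1 j
    rw [← RingHom.map_vecMul, hv]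
    simp only [Pi.smul_apply, smul_eq_mul, C_mul, Function.comp_apply]
  rw [charmatrix, vecMul_sub, RingHom.mapMatrix_apply, hCv, sub_smul, scalar_apply,
    ← smul_one_eq_diagonal, vecMul_smul, vecMul_one]

theorem X_sub_C_mul_charpoly_add_vecMulVec {A : Matrix n n R} {μ : R} {v : n → R}
    (hv : v ᵥ* A = μ • v) (x : n → R) :
    (X - C μ) * (A + vecMulVec x v).charpoly = (X - C (μ + v ⬝ᵥ x)) * A.charpoly := by
  rw [charpoly, charmatrix_add_vecMulVec,
    mul_det_sub_vecMulVec_of_vecMul_eq_smul (monic_X_sub_C μ).isRegular.left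
      (vecMul_charmatrix_of_vecMul_eq_smul hv),
    ← RingHom.map_dotProduct, sub_sub, ← C_add, charpoly]

theorem charpoly_add_vecMulVec_of_dotProduct_eq_zero {A : Matrix n n R} {μ : R} {v x : n → R}
    (hv : v ᵥ* A = μ • v) (hvx : v ⬝ᵥ x = 0) :
    (A + vecMulVec x v).charpoly = A.charpoly := by
  apply (monic_X_sub_C μ).isRegular.left
  simpa only [hvx, add_zero] using X_sub_C_mul_charpoly_add_vecMulVec hv x

theorem charpoly_add_vecMulVec_sum_of_dotProduct_eq_zero {A : Matrix n n R} {s : Finset κ}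
    {μ : κ → R} {v : κ → n → R} {x : n → R} (hv : ∀ j ∈ s, v j ᵥ* A = μ j • v j)
    (hvx : ∀ j ∈ s, v j ⬝ᵥ x = 0) :
    (A + vecMulVec x (∑ j ∈ s, v j)).charpoly = A.charpoly := by
  classical
  induction s using Finset.induction_on with
  | empty => rw [Finset.sum_empty, vecMulVec_zero, add_zero]
  | insert j s hj ih =>
    rw [Finset.forall_mem_insert] at hv hvx
    have hvj : v j ᵥ* (A + vecMulVec x (∑ i ∈ s, v i)) = μ j • v j := by
      rw [vecMul_add_vecMulVec_of_dotProduct_eq_zero hvx.1, hv.1]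
    rw [Finset.sum_insert hj, add_comm (v j), vecMulVec_add, ← add_assoc,
      charpoly_add_vecMulVec_of_dotProduct_eq_zero hvj hvx.1, ih hv.2 hvx.2]

theorem X_sub_C_mul_charpoly_add_vecMulVec_sum [Fintype κ] {A : Matrix n n R} {μ : κ → R}
    {v : κ → n → R} (hv : ∀ j, v j ᵥ* A = μ j • v j) {x : n → R} {j₀ : κ}
    (hvx : ∀ j ≠ j₀, v j ⬝ᵥ x = 0) :
    (X - C (μ j₀)) * (A + vecMulVec x (∑ j, v j)).charpoly =
      (X - C (μ j₀ + v j₀ ⬝ᵥ x)) * A.charpoly := by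
  classical
  have hvx_erase : ∀ j ∈ Finset.univ.erase j₀, v j ⬝ᵥ x = 0 :=
    fun j hj => hvx j (Finset.ne_of_mem_erase hj)
  have hv_update : ∀ j ∈ Finset.univ.erase j₀, v j ᵥ* (A + vecMulVec x (v j₀)) = μ j • v j :=
    fun j hj => by rw [vecMul_add_vecMulVec_of_dotProduct_eq_zero (hvx_erase j hj), hv]
  rw [← Finset.add_sum_erase _ v (Finset.mem_univ j₀), vecMulVec_add, ← add_assoc,
    charpoly_add_vecMulVec_sum_of_dotProduct_eq_zero hv_update hvx_erase,
    X_sub_C_mul_charpoly_add_vecMulVec (hv j₀)]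

theorem charpoly_rankOne_update_general {ι : Type*} [Fintype ι] [DecidableEq ι] [Fintype κ]
    {A : Matrix n n R} {lam : ι → R} (hA : A.charpoly = ∏ i, (X - C (lam i)))
    {e : κ → ι} {v : κ → n → R} (hv : ∀ j, v j ᵥ* A = lam (e j) • v j)
    {x : n → R} {j₀ : κ} (hvx : ∀ j ≠ j₀, v j ⬝ᵥ x = 0) :
    (A + vecMulVec x (∑ j, v j)).charpoly =
      (X - C (lam (e j₀) + v j₀ ⬝ᵥ x)) * ∏ i ∈ Finset.univ.erase (e j₀), (X - C (lam i)) := by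
  apply (monic_X_sub_C (lam (e j₀))).isRegular.left
  beta_reduce
  rw [X_sub_C_mul_charpoly_add_vecMulVec_sum hv hvx, hA,
    ← Finset.mul_prod_erase _ _ (Finset.mem_univ (e j₀)), mul_left_comm]

end CommRing

/-- Rank-one update of the spectrum (extension of Ding–Zhou): if `w₁, …, w_k` are left
eigenvectors of `A` for the eigenvalues `λ₁, …, λ_k` and `x` is perpendicular to
`w₂, …, w_k`, then the rank-one update `A + x (w₁ + ⋯ + w_k)*` has the same eigenvalues
as `A`, except that `λ₁` is replaced by `λ₁ + ⟨w₁, x⟩`. -/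
theorem charpoly_rankOne_update (n : ℕ) (hn : 1 ≤ n)
    (A : Matrix (Fin n) (Fin n) ℂ) (lam : Fin n → ℂ)
    (hA : A.charpoly = ∏ j, (X - C (lam j)))
    (k : ℕ) (hk : 1 ≤ k) (hkn : k ≤ n)
    (w : Fin k → Fin n → ℂ)
    (hw : ∀ j : Fin k, star (w j) ᵥ* A = lam (Fin.castLE hkn j) • star (w j))
    (x : Fin n → ℂ)
    (hx : ∀ j : Fin k, 0 < (j : ℕ) → ∑ i, (starRingEnd ℂ) (w j i) * x i = 0) :
    (A + Matrix.of fun p q => x p * (starRingEnd ℂ) ((∑ j, w j) q)).charpoly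
      = (X - C (lam ⟨0, hn⟩ + ∑ i, (starRingEnd ℂ) (w ⟨0, hk⟩ i) * x i)) *
        ∏ j ∈ Finset.univ.erase (⟨0, hn⟩ : Fin n), (X - C (lam j)) := by
  have hwx : ∀ j ≠ (⟨0, hk⟩ : Fin k), star (w j) ⬝ᵥ x = 0 :=
    fun j hj => hx j (Nat.pos_of_ne_zero (Fin.val_ne_of_ne hj))
  have update := charpoly_rankOne_update_general hA hw hwx
  rw [← star_sum] at update
  exact update
end
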